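/- Let d ≥ 3 be an odd integer, n = (d²+1)/2, and in R = 𝔽₂[x]/(xⁿ−1) set a = 1 + x and b = (1+x)·P_d(x) (so that b = 1 + x^d and wt(a) + wt(b) = 4, i.e., every stabilizer generator has weight 4). Then dim_{𝔽₂} C₁(a,b) − dim_{𝔽₂} C₂(a,b) = 2 and d_GB(a,b) = d; that is, the GB code of (a,b) is a [[d²+1, 2, d]] quantum code, and for d ≥ 5 it is degenerate since its stabilizer generators have weight 4 < d. -/

import Mathlib

open Polynomial

noncomputable section

/-- `R2 n` is the ring `𝔽₂[x]/(xⁿ − 1)`. -/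
abbrev R2 (n : ℕ) : Type := AdjoinRoot (X ^ n - 1 : (ZMod 2)[X])

/-- The image of `x` in `𝔽₂[x]/(xⁿ − 1)`. -/
def xR (n : ℕ) : R2 n := AdjoinRoot.root _

/-- The quotient map `𝔽₂[x] → 𝔽₂[x]/(xⁿ − 1)`. -/
def mkR (n : ℕ) : (ZMod 2)[X] →+* R2 n := AdjoinRoot.mk _

lemma xR_pow_n (n : ℕ) : xR n ^ n = 1 := by
  have h : (AdjoinRoot.mk (X ^ n - 1 : (ZMod 2)[X])) (X ^ n - 1) = 0 := AdjoinRoot.mk_self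
  rw [map_sub, map_pow, AdjoinRoot.mk_X, map_one, sub_eq_zero] at h
  exact h

/-- The unique representative of degree `< n` of an element of `𝔽₂[x]/(xⁿ − 1)` (junk if `n = 0`). -/
def repP {n : ℕ} (u : R2 n) : (ZMod 2)[X] :=
  if h : n = 0 then 0
  else AdjoinRoot.modByMonicHom (by simpa using monic_X_pow_sub_C (1 : ZMod 2) h) u

/-- The Hamming weight of an element of `𝔽₂[x]/(xⁿ − 1)`: the number of nonzero coefficients
of its degree-`< n` representative. -/
def wt {n : ℕ} (u : R2 n) : ℕ := (repP u).support.card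

/-- Coefficient of the degree-`< n` representative, indexed by `ℤ/n`. -/
def coeffZ {n : ℕ} (u : R2 n) (i : ZMod n) : ZMod 2 := (repP u).coeff i.val

/-- The X-stabilizer space `C₂(a,b) = {(r·a, r·b) : r ∈ R}` of the GB code of `(a,b)`. -/
def C2set (n : ℕ) (a b : R2 n) : Set (R2 n × R2 n) := {p | ∃ r : R2 n, p = (r * a, r * b)}

/-- The space `C₁(a,b) = {(u,v) : u·b + v·a = 0}` of the GB code of `(a,b)`. -/
def C1set (n : ℕ) (a b : R2 n) : Set (R2 n × R2 n) := {p | p.1 * b + p.2 * a = 0}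

/-- The (X-side) minimum distance of the GB code of `(a,b)`. -/
def dGB (n : ℕ) (a b : R2 n) : ℕ :=
  sInf {k | ∃ p ∈ C1set n a b \ C2set n a b, wt p.1 + wt p.2 = k}

/-- `P_m(x) = 1 + x + ⋯ + x^{m−1}` as a polynomial over `𝔽₂`. -/
def PmP (m : ℕ) : (ZMod 2)[X] := ∑ i ∈ Finset.range m, X ^ i

/-- `P_m(x) = 1 + x + ⋯ + x^{m−1}` as an element of `𝔽₂[x]/(xⁿ − 1)`. -/
def PmR (n m : ℕ) : R2 n := ∑ i ∈ Finset.range m, xR n ^ i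

/-- The ring endomorphism of `𝔽₂[x]/(xⁿ − 1)` induced by `x ↦ x^d`. -/
def substHom (n d : ℕ) : R2 n →+* R2 n :=
  AdjoinRoot.lift (algebraMap (ZMod 2) (R2 n)) (xR n ^ d) (by
    simp only [eval₂_sub, eval₂_X_pow, eval₂_one]
    rw [← pow_mul, mul_comm d n, pow_mul, xR_pow_n, one_pow, sub_self])

/-- The Euclidean inner product on `𝔽₂²ⁿ`, in terms of pairs `(u₁, u₂)` of elements of
`𝔽₂[x]/(xⁿ − 1)` (representing the concatenated binary vector `(u₁ | u₂)`). -/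
def eucInner (n : ℕ) (p q : R2 n × R2 n) : ZMod 2 :=
  ∑ i ∈ Finset.range n,
    ((repP p.1).coeff i * (repP q.1).coeff i + (repP p.2).coeff i * (repP q.2).coeff i)

/-- The symplectic inner product of `u₁ + w·u₂` and `v₁ + w·v₂`, i.e.
`Σᵢ (u₁ᵢ·v₂ᵢ + u₂ᵢ·v₁ᵢ)`, in terms of the pairs `(u₁,u₂)`, `(v₁,v₂)`. -/
def sympInner (n : ℕ) (p q : R2 n × R2 n) : ZMod 2 :=
  ∑ i ∈ Finset.range n,
    ((repP p.1).coeff i * (repP q.2).coeff i + (repP p.2).coeff i * (repP q.1).coeff i)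

/-- Euclidean dual of a set of (pairs representing) binary vectors of length `2n`. -/
def eucDual (n : ℕ) (S : Set (R2 n × R2 n)) : Set (R2 n × R2 n) :=
  {p | ∀ q ∈ S, eucInner n q p = 0}

/-- Symplectic dual of a set of (pairs representing) vectors of `𝔽₄ⁿ`. -/
def sympDual (n : ℕ) (S : Set (R2 n × R2 n)) : Set (R2 n × R2 n) :=
  {p | ∀ q ∈ S, sympInner n q p = 0}

/-- Number of nonzero `𝔽₄`-coordinates of `u₁ + w·u₂`, in terms of the pair `(u₁,u₂)`. -/
def wt4 (n : ℕ) (p : R2 n × R2 n) : ℕ := ((repP p.1).support ∪ (repP p.2).support).card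

/-- The `2n` binary coordinates of a pair `(u₁,u₂)`. -/
def coords {n : ℕ} (p : R2 n × R2 n) : (Fin n ⊕ Fin n) → ZMod 2 :=
  Sum.elim (fun i => (repP p.1).coeff i) (fun i => (repP p.2).coeff i)

/-- Vertex set of the Tanner graph: check vertices `x_t` (left) and data vertices
`q_s`, `q'_s` (right). -/
def TV (n : ℕ) : Type := (ZMod n) ⊕ ((ZMod n) ⊕ (ZMod n))

/-- `trel a b v w` holds iff `v` is a check vertex `x_t`, `w` is a data vertex, and they are
connected: `x_t ~ q_s` iff `a_{s−t} = 1`, and `x_t ~ q'_s` iff `b_{s−t} = 1`. -/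
def trel {n : ℕ} (a b : R2 n) (v w : TV n) : Prop :=
  ∃ t s : ZMod n, v = Sum.inl t ∧
    ((w = Sum.inr (Sum.inl s) ∧ coeffZ a (s - t) = 1) ∨
     (w = Sum.inr (Sum.inr s) ∧ coeffZ b (s - t) = 1))

/-- The Tanner graph `T(a,b)` of the GB code of `(a,b)`. -/
def tanner (n : ℕ) (a b : R2 n) : SimpleGraph (TV n) where
  Adj v w := trel a b v w ∨ trel a b w v
  symm := ⟨fun v w h => Or.symm h⟩
  loopless := by
    constructor
    rintro v (⟨t, s, hv, hw⟩ | ⟨t, s, hv, hw⟩) <;>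
      rcases hw with ⟨hw, -⟩ | ⟨hw, -⟩ <;> (subst hv; simp at hw)

end

noncomputable section

lemma mkR_surjective (n : ℕ) : Function.Surjective (mkR n) := AdjoinRoot.mk_surjective

lemma mkR_X (n : ℕ) : mkR n X = xR n := AdjoinRoot.mk_X

lemma R2.add_self {n : ℕ} (u : R2 n) : u + u = 0 := by
  obtain ⟨p, rfl⟩ := mkR_surjective n u
  rw [← map_add, CharTwo.add_self_eq_zero, map_zero]

lemma mkR_PmP (n m : ℕ) : mkR n (PmP m) = PmR n m := by
  simp [PmP, PmR, mkR_X]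

lemma mkR_X_sub_one (n : ℕ) : mkR n (X - 1) = 1 + xR n := by
  rw [map_sub, mkR_X, map_one]
  linear_combination R2.add_self (-1 : R2 n)

lemma monic_X_pow_sub_one {n : ℕ} (hn : n ≠ 0) : (X ^ n - 1 : (ZMod 2)[X]).Monic := by
  simpa using monic_X_pow_sub_C (1 : ZMod 2) hn

lemma degree_X_pow_sub_one {n : ℕ} (hn : n ≠ 0) : (X ^ n - 1 : (ZMod 2)[X]).degree = n := by
  simpa using degree_X_pow_sub_C (Nat.pos_of_ne_zero hn) (1 : ZMod 2)

lemma mkR_repP {n : ℕ} (hn : n ≠ 0) (u : R2 n) : mkR n (repP u) = u := by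
  rw [repP, dif_neg hn]
  exact AdjoinRoot.mk_leftInverse _ u

lemma repP_mkR {n : ℕ} (hn : n ≠ 0) {p : (ZMod 2)[X]} (hp : p.degree < n) :
    repP (mkR n p) = p := by
  rw [repP, dif_neg hn, mkR, AdjoinRoot.modByMonicHom_mk,
    modByMonic_eq_self_iff (monic_X_pow_sub_one hn), degree_X_pow_sub_one hn]
  exact hp

lemma wt_zero (n : ℕ) : wt (0 : R2 n) = 0 := by
  unfold wt repP
  split_ifs <;> simp

lemma wt_add_le {n : ℕ} (u v : R2 n) : wt (u + v) ≤ wt u + wt v := by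
  have h : repP (u + v) = repP u + repP v := by
    unfold repP
    split_ifs <;> simp
  rw [wt, h]
  exact (Finset.card_le_card support_add).trans (Finset.card_union_le _ _)

lemma wt_sum_le {n : ℕ} {ι : Type*} (s : Finset ι) (f : ι → R2 n) :
    wt (∑ i ∈ s, f i) ≤ ∑ i ∈ s, wt (f i) :=
  Finset.le_sum_of_subadditive wt (wt_zero n).le wt_add_le s f

lemma wt_xR_pow_le {n : ℕ} (hn : n ≠ 0) (k : ℕ) : wt (xR n ^ k) ≤ 1 := by
  have h : xR n ^ k = mkR n (X ^ (k % n)) := by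
    rw [map_pow, mkR_X, pow_eq_pow_mod k (xR_pow_n n)]
  rw [h, wt, repP_mkR hn]
  · exact card_support_le_one_iff_monomial.mpr ⟨_, _, X_pow_eq_monomial _⟩
  · simpa using Nat.mod_lt k (Nat.pos_of_ne_zero hn)

lemma wt_mkR_le {n : ℕ} (hn : n ≠ 0) (p : (ZMod 2)[X]) : wt (mkR n p) ≤ p.support.card := by
  conv_lhs => rw [p.as_sum_support_C_mul_X_pow, map_sum]
  refine (wt_sum_le _ _).trans ?_
  rw [Finset.card_eq_sum_ones]
  refine Finset.sum_le_sum fun i hi => ?_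
  have h01 : ∀ c : ZMod 2, c ≠ 0 → c = 1 := by decide
  have h : p.coeff i = 1 := h01 _ (mem_support_iff.mp hi)
  rw [h, map_one, one_mul, map_pow, mkR_X]
  exact wt_xR_pow_le hn i

lemma wt_mul_le {n : ℕ} (hn : n ≠ 0) (u v : R2 n) : wt (u * v) ≤ wt u * wt v := by
  conv_lhs => rw [← mkR_repP hn u, ← mkR_repP hn v, ← map_mul]
  exact (wt_mkR_le hn _).trans card_support_mul_le

lemma wt_one_add_xR_pow {n k : ℕ} (hk : k ≠ 0) (hkn : k < n) : wt (1 + xR n ^ k) = 2 := by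
  have h : 1 + xR n ^ k = mkR n (C 1 * X ^ 0 + C 1 * X ^ k) := by simp [mkR_X]
  rw [wt, h, repP_mkR (by lia), card_support_binomial hk.symm one_ne_zero one_ne_zero]
  refine (degree_add_le _ _).trans_lt (max_lt ?_ ?_)
  · simpa using (by lia : 0 < n)
  · simpa using hkn

lemma wt_PmR_self {n : ℕ} (hn : n ≠ 0) : wt (PmR n n) = n := by
  have hc (i : ℕ) : (PmP n).coeff i = if i < n then 1 else 0 := by
    simp [PmP, coeff_X_pow]
  have hs : (PmP n).support = Finset.range n := by
    ext i
    simp [hc]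
  rw [wt, ← mkR_PmP, repP_mkR hn, hs, Finset.card_range]
  rw [degree_lt_iff_coeff_zero]
  intro m hm
  rw [hc, if_neg (by simpa using hm)]

/-- Evaluation at `x = 1`, the augmentation `𝔽₂[x]/(xⁿ − 1) → 𝔽₂`. -/
def aug (n : ℕ) : R2 n →+* ZMod 2 :=
  AdjoinRoot.lift (RingHom.id _) 1 (by simp)

lemma aug_mkR (n : ℕ) (p : (ZMod 2)[X]) : aug n (mkR n p) = p.eval 1 := by
  rw [aug, mkR, AdjoinRoot.lift_mk]
  rfl

lemma aug_xR (n : ℕ) : aug n (xR n) = 1 := by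
  rw [← mkR_X, aug_mkR, eval_X]

lemma aug_PmR (n m : ℕ) : aug n (PmR n m) = m := by
  simp [PmR, aug_xR]

lemma one_add_xR_mul_PmR (n m : ℕ) : (1 + xR n) * PmR n m = 1 + xR n ^ m := by
  rw [← mkR_X_sub_one, ← mkR_PmP, ← map_mul, PmP, mul_geom_sum, map_sub,
    map_pow, mkR_X, map_one]
  linear_combination R2.add_self (-1 : R2 n)

lemma exists_eq_algebraMap_aug_add (n : ℕ) (u : R2 n) :
    ∃ r, u = algebraMap (ZMod 2) (R2 n) (aug n u) + (1 + xR n) * r := by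
  obtain ⟨p, rfl⟩ := mkR_surjective n u
  obtain ⟨q, hq⟩ := X_sub_C_dvd_sub_C_eval (a := (1 : ZMod 2)) (p := p)
  refine ⟨mkR n q, ?_⟩
  rw [map_one] at hq
  rw [aug_mkR, ← mkR_X_sub_one, ← map_mul, ← hq, map_sub]
  exact (add_sub_cancel _ _).symm

lemma mul_PmR_self (n : ℕ) (u : R2 n) : u * PmR n n = aug n u • PmR n n := by
  obtain ⟨r, hr⟩ := exists_eq_algebraMap_aug_add n u
  have h : (1 + xR n) * PmR n n = 0 := by
    rw [one_add_xR_mul_PmR, xR_pow_n, R2.add_self]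
  rw [Algebra.smul_def]
  conv_lhs => rw [hr]
  linear_combination r * h

lemma one_add_xR_mul_eq_zero_iff {n : ℕ} (w : R2 n) :
    (1 + xR n) * w = 0 ↔ ∃ c : ZMod 2, c • PmR n n = w := by
  constructor
  · intro h
    obtain ⟨p, rfl⟩ := mkR_surjective n w
    rw [← mkR_X_sub_one, ← map_mul, mkR, AdjoinRoot.mk_eq_zero, ← mul_geom_sum] at h
    obtain ⟨q, rfl⟩ := (mul_dvd_mul_iff_left (X_sub_C_ne_zero (1 : ZMod 2))).mp h
    refine ⟨aug n (mkR n q), ?_⟩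
    rw [← mul_PmR_self, ← mkR_PmP, ← map_mul, mul_comm, PmP]
  · rintro ⟨c, rfl⟩
    rw [mul_smul_comm, one_add_xR_mul_PmR, xR_pow_n, R2.add_self, smul_zero]

lemma PmR_add (n k m : ℕ) : PmR n (k + m) = PmR n k + xR n ^ k * PmR n m := by
  simp only [PmR, Finset.sum_range_add, pow_add, Finset.mul_sum]

/-- `P_k(x^d) = 1 + x^d + ⋯ + x^{d(k−1)}` as an element of `𝔽₂[x]/(xⁿ − 1)`. -/
def strideSum (n d k : ℕ) : R2 n := ∑ j ∈ Finset.range k, xR n ^ (d * j)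

lemma PmR_mul_strideSum (n d k : ℕ) : PmR n d * strideSum n d k = PmR n (d * k) := by
  induction k with
  | zero => simp [strideSum, PmR]
  | succ k ih =>
    rw [strideSum, Finset.sum_range_succ, mul_add, ← strideSum, ih, mul_add_one, PmR_add, mul_comm]
    ring

lemma aug_strideSum (n d k : ℕ) : aug n (strideSum n d k) = k := by
  simp [strideSum, aug_xR]

lemma wt_strideSum_le {n : ℕ} (hn : n ≠ 0) (d k : ℕ) : wt (strideSum n d k) ≤ k := by
  refine (wt_sum_le _ _).trans ((Finset.sum_le_sum fun j _ => wt_xR_pow_le hn _).trans ?_)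
  simp

lemma wt_PmR_le {n : ℕ} (hn : n ≠ 0) (k : ℕ) : wt (PmR n k) ≤ k := by
  refine (wt_sum_le _ _).trans ((Finset.sum_le_sum fun j _ => wt_xR_pow_le hn _).trans ?_)
  simp

lemma wt_xR_pow_mul_le {n : ℕ} (hn : n ≠ 0) (k : ℕ) (u : R2 n) : wt (xR n ^ k * u) ≤ wt u :=
  (wt_mul_le hn _ _).trans (by simpa using Nat.mul_le_mul_right _ (wt_xR_pow_le hn k))

/-- If `(u,v)` and `(g,f)` both solve `u·p + v ∈ 𝔽₂·Pₙ` and pair to an odd intersection number,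
then every translate of one support meets the other, which bounds the weights from below. -/
lemma le_wt_mul_add_wt_mul {n : ℕ} (hn : n ≠ 0) {u v f g p : R2 n} {c : ZMod 2}
    (huv : u * p + v = c • PmR n n) (hfg : f + p * g = PmR n n) (hc : aug n u + c * aug n g = 1) :
    n ≤ wt u * wt f + wt v * wt g := by
  have h : u * f + v * g = PmR n n := by
    have hu := mul_PmR_self n u
    have hg := mul_PmR_self n g
    have hv := R2.add_self (u * p * g)
    have key : u * f + v * g = (aug n u + c * aug n g) • PmR n n := by
      rw [add_smul, mul_smul, ← hu, ← hg, mul_comm g, ← smul_mul_assoc, ← huv, ← hfg]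
      linear_combination -hv
    rw [key, hc, one_smul]
  calc n = wt (u * f + v * g) := by rw [h, wt_PmR_self hn]
    _ ≤ _ := (wt_add_le _ _).trans (add_le_add (wt_mul_le hn _ _) (wt_mul_le hn _ _))

lemma mem_C1set_iff {n d : ℕ} {u v : R2 n} :
    (u, v) ∈ C1set n (1 + xR n) ((1 + xR n) * PmR n d) ↔
      ∃ c : ZMod 2, c • PmR n n = u * PmR n d + v := by
  rw [← one_add_xR_mul_eq_zero_iff]
  simp only [C1set, Set.mem_ofPred_eq]
  ring_nf

lemma finite_R2 {n : ℕ} (hn : n ≠ 0) : Module.Finite (ZMod 2) (R2 n) :=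
  (AdjoinRoot.powerBasis' (monic_X_pow_sub_one hn)).finite

lemma finrank_ker_mulLeft_one_add_xR {n : ℕ} (hn : n ≠ 0) :
    Module.finrank (ZMod 2) (LinearMap.ker (LinearMap.mulLeft (ZMod 2) (1 + xR n))) = 1 := by
  have h : LinearMap.ker (LinearMap.mulLeft (ZMod 2) (1 + xR n))
      = Submodule.span (ZMod 2) {PmR n n} := by
    ext w
    rw [LinearMap.mem_ker, LinearMap.mulLeft_apply, one_add_xR_mul_eq_zero_iff,
      Submodule.mem_span_singleton]
  rw [h]
  refine finrank_span_singleton fun h0 => hn ?_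
  rw [← wt_PmR_self hn, h0, wt_zero]

/-- If `a ∣ b`, the GB code of `(a,b)` encodes `2·dim(Ann a)` qubits. -/
lemma finrank_C1set_eq {n : ℕ} (hn : n ≠ 0) (a p : R2 n) :
    Module.finrank (ZMod 2) (Submodule.span (ZMod 2) (C1set n a (a * p))) =
      Module.finrank (ZMod 2) (Submodule.span (ZMod 2) (C2set n a (a * p))) +
        2 * Module.finrank (ZMod 2) (LinearMap.ker (LinearMap.mulLeft (ZMod 2) a)) := by
  have := finite_R2 hn
  let μ := LinearMap.mulLeft (ZMod 2) a
  let φ : R2 n × R2 n →ₗ[ZMod 2] R2 n :=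
    (LinearMap.mulLeft (ZMod 2) (a * p)).coprod (LinearMap.mulLeft (ZMod 2) a)
  let ψ : R2 n →ₗ[ZMod 2] R2 n × R2 n :=
    (LinearMap.mulLeft (ZMod 2) a).prod (LinearMap.mulLeft (ZMod 2) (a * p))
  have h1 : C1set n a (a * p) = LinearMap.ker φ := by
    ext q
    simp only [C1set, φ, Set.mem_ofPred_eq, SetLike.mem_coe, LinearMap.mem_ker,
      LinearMap.coprod_apply, LinearMap.mulLeft_apply, mul_comm q.1, mul_comm q.2]
  have h2 : C2set n a (a * p) = LinearMap.range ψ := by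
    ext q
    simp only [C2set, Set.mem_ofPred_eq, SetLike.mem_coe, LinearMap.mem_range]
    refine exists_congr fun r => ?_
    rw [mul_comm r, mul_comm r, eq_comm]
    rfl
  have hφ : LinearMap.range φ = LinearMap.range μ := by
    ext w
    constructor
    · rintro ⟨⟨u, v⟩, rfl⟩
      exact ⟨p * u + v, by simp [φ, μ]; ring⟩
    · rintro ⟨v, rfl⟩
      exact ⟨(0, v), by simp [φ, μ]⟩
  have hψ : LinearMap.ker ψ = LinearMap.ker μ := by
    ext r
    have hr : ψ r = (a * r, a * p * r) := rfl
    rw [LinearMap.mem_ker, LinearMap.mem_ker, hr, Prod.mk_eq_zero]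
    refine ⟨And.left, fun h => ⟨h, ?_⟩⟩
    change a * r = 0 at h
    linear_combination p * h
  have e1 := φ.finrank_range_add_finrank_ker
  have e2 := ψ.finrank_range_add_finrank_ker
  have e3 := μ.finrank_range_add_finrank_ker
  rw [hφ, Module.finrank_prod] at e1
  rw [hψ] at e2
  rw [h1, h2, Submodule.span_eq, Submodule.span_eq]
  change _ = _ + 2 * Module.finrank (ZMod 2) (LinearMap.ker μ)
  lia

lemma aug_ne_zero_or_of_notMem_C2set {n : ℕ} {u v p : R2 n} {c : ZMod 2}
    (huv : c • PmR n n = u * p + v)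
    (h : (u, v) ∉ C2set n (1 + xR n) ((1 + xR n) * p)) : aug n u ≠ 0 ∨ c ≠ 0 := by
  by_contra! hc
  obtain ⟨r, hr⟩ := exists_eq_algebraMap_aug_add n u
  rw [hc.1, map_zero, zero_add] at hr
  rw [hc.2, zero_smul] at huv
  refine h ⟨r, Prod.ext (by rw [hr, mul_comm]) ?_⟩
  change v = _
  linear_combination R2.add_self v + huv + p * hr

section Distance

variable {n e : ℕ}

lemma PmR_add_PmR_mul_strideSum (hne : n + e = (2 * e + 1) * (e + 1)) :
    PmR n e + PmR n (2 * e + 1) * strideSum n (2 * e + 1) (e + 1) = PmR n n := by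
  rw [PmR_mul_strideSum, ← hne, PmR_add, xR_pow_n]
  linear_combination R2.add_self (PmR n e)

lemma xR_pow_mul_PmR_add_PmR_mul_strideSum (hne : n = (2 * e + 1) * e + (e + 1)) :
    xR n ^ ((2 * e + 1) * e) * PmR n (e + 1) + PmR n (2 * e + 1) * strideSum n (2 * e + 1) e
      = PmR n n := by
  have h : PmR n n = PmR n ((2 * e + 1) * e + (e + 1)) := congrArg (PmR n) hne
  rw [h, PmR_mul_strideSum, PmR_add n ((2 * e + 1) * e), add_comm]

lemma le_wt_add_wt (he : n = 2 * e ^ 2 + 2 * e + 1) {u v : R2 n}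
    (h1 : (u, v) ∈ C1set n (1 + xR n) ((1 + xR n) * PmR n (2 * e + 1)))
    (h2 : (u, v) ∉ C2set n (1 + xR n) ((1 + xR n) * PmR n (2 * e + 1))) :
    2 * e + 1 ≤ wt u + wt v := by
  have hn : n ≠ 0 := by lia
  obtain ⟨c, hc⟩ := mem_C1set_iff.mp h1
  have hne := aug_ne_zero_or_of_notMem_C2set hc h2
  have hpair : aug n u + c * ((e + 1 : ℕ) : ZMod 2) = 1 ∨ aug n u + c * (e : ZMod 2) = 1 := by
    push_cast
    generalize aug n u = s at *
    generalize (e : ZMod 2) = t at *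
    clear * - hne
    decide +revert
  have hwt : n ≤ wt u * e + wt v * (e + 1) ∨ n ≤ wt u * (e + 1) + wt v * e := by
    refine hpair.imp (fun h => ?_) (fun h => ?_)
    · refine (le_wt_mul_add_wt_mul hn hc.symm (PmR_add_PmR_mul_strideSum (by lia))
        (by rwa [aug_strideSum])).trans ?_
      gcongr
      exacts [wt_PmR_le hn _, wt_strideSum_le hn _ _]
    · refine (le_wt_mul_add_wt_mul hn hc.symm (xR_pow_mul_PmR_add_PmR_mul_strideSum (by lia))
        (by rwa [aug_strideSum])).trans ?_
      gcongr
      exacts [(wt_xR_pow_mul_le hn _ _).trans (wt_PmR_le hn _), wt_strideSum_le hn _ _]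
  by_contra! hlt
  rcases hwt with h | h <;> nlinarith

lemma exists_wt_add_wt_le (he : n = 2 * e ^ 2 + 2 * e + 1) :
    ∃ u v : R2 n, (u, v) ∈ C1set n (1 + xR n) ((1 + xR n) * PmR n (2 * e + 1)) ∧
      (u, v) ∉ C2set n (1 + xR n) ((1 + xR n) * PmR n (2 * e + 1)) ∧
      wt u + wt v ≤ 2 * e + 1 := by
  have hn : n ≠ 0 := by lia
  refine ⟨strideSum n (2 * e + 1) (e + 1), PmR n e, mem_C1set_iff.mpr ⟨1, ?_⟩, ?_, ?_⟩
  · rw [one_smul, ← PmR_add_PmR_mul_strideSum (e := e) (by lia)]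
    ring
  · rintro ⟨r, hr⟩
    have h1 := congrArg (aug n) (congrArg Prod.fst hr)
    have h2 := congrArg (aug n) (congrArg Prod.snd hr)
    simp only [aug_strideSum, aug_PmR, map_mul, map_add, map_one, aug_xR,
      CharTwo.add_self_eq_zero, mul_zero, zero_mul, Nat.cast_add, Nat.cast_one] at h1 h2
    simp [h2] at h1
  · have := wt_strideSum_le hn (2 * e + 1) (e + 1)
    have := wt_PmR_le hn e
    lia

lemma dGB_one_add_xR (he : n = 2 * e ^ 2 + 2 * e + 1) :
    dGB n (1 + xR n) ((1 + xR n) * PmR n (2 * e + 1)) = 2 * e + 1 := by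
  obtain ⟨u, v, h1, h2, hle⟩ := exists_wt_add_wt_le he
  apply le_antisymm
  · refine le_trans (Nat.sInf_le ?_) hle
    exact ⟨(u, v), ⟨h1, h2⟩, rfl⟩
  · refine le_csInf ⟨_, (u, v), ⟨h1, h2⟩, rfl⟩ ?_
    rintro _ ⟨⟨u', v'⟩, ⟨h1', h2'⟩, rfl⟩
    exact le_wt_add_wt he h1' h2'

end Distance

/-- For odd `d ≥ 3`, `2n = d² + 1`, `a = 1 + x`, and `b = (1+x)·P_d(x)`
in `R = 𝔽₂[x]/(xⁿ−1)`: `b = 1 + x^d`, the stabilizer generators have weight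
`wt(a) + wt(b) = 4`, `dim C₁(a,b) − dim C₂(a,b) = 2`, and `d_GB(a,b) = d`; i.e. the GB
code of `(a,b)` is a `[[d²+1, 2, d]]` quantum code, which for `d ≥ 5` is degenerate
(it has a nonzero stabilizer of weight `4 < d`). -/
theorem stmt_7 (d n : ℕ) (hd : Odd d) (hd3 : 3 ≤ d) (hn : 2 * n = d ^ 2 + 1)
    (a b : R2 n) (ha : a = 1 + xR n) (hb : b = (1 + xR n) * PmR n d) :
    b = 1 + xR n ^ d ∧
    wt a + wt b = 4 ∧
    Module.finrank (ZMod 2) ↥(Submodule.span (ZMod 2) (C1set n a b)) -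
        Module.finrank (ZMod 2) ↥(Submodule.span (ZMod 2) (C2set n a b)) = 2 ∧
    dGB n a b = d ∧
    (5 ≤ d → ∃ p ∈ C2set n a b, p ≠ 0 ∧ wt p.1 + wt p.2 < dGB n a b) := by
  subst ha hb
  obtain ⟨e, rfl⟩ := hd
  have he : n = 2 * e ^ 2 + 2 * e + 1 := by lia
  have he1 : 1 ≤ e := by lia
  have hb := one_add_xR_mul_PmR n (2 * e + 1)
  have hwt : wt (1 + xR n) + wt ((1 + xR n) * PmR n (2 * e + 1)) = 4 := by
    have h1 : wt (1 + xR n) = 2 := by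
      simpa using wt_one_add_xR_pow (n := n) one_ne_zero (by nlinarith)
    rw [hb, h1, wt_one_add_xR_pow (by lia) (by nlinarith)]
  have hdist := dGB_one_add_xR he
  refine ⟨hb, hwt, ?_, hdist, fun h5 => ⟨_, ⟨1, rfl⟩, fun h0 => ?_, ?_⟩⟩
  · rw [finrank_C1set_eq (by lia), finrank_ker_mulLeft_one_add_xR (by lia)]
    lia
  · rw [one_mul, one_mul, Prod.mk_eq_zero] at h0
    rw [h0.2, h0.1, wt_zero] at hwt
    lia
  · rw [hdist, one_mul, one_mul, hwt]
    lia

end
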